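/- Let E be a non-empty compatible set of n-cbc. For every Z ∈ E there exist k ≥ 0, r_1,…,r_k ∈ [n) and X_1,…,X_k ∈ E such that the n-cbc X := Z ∘_{r_1} X_1 ∘_{r_2} ⋯ ∘_{r_k} X_k borders E, and moreover any two sets R, R' ∈ R(X) with R ∩ R' ≠ ∅ are equal. -/

import Mathlib

/-!
Identify an `n`-cbc with a set of `n` pairs `(i, j)` in `[n)²`; composing on the right can only
shrink `L`. Among all `X = Z ∘ ⋯` choose one with `|L(X)|` minimal and, subject to that, with
`|R(X)|` minimal.

Minimality of `|L(X)|` says that no row `i ∈ L(X)` disappears when composing further. Applied to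
`X ∘_r X`, this gives `R_i + L(X) = ℤ/n` for each row `R_i` of `X`; hence `|R_i| |L(X)| ≥ n`, and as
`∑ |R_i| = |X| = n` all these are equalities, so each `(R_i, L(X))` is a factorization
(`row_card_mul`, `row_add_inj`). Applied to `X ∘_r Y ∘_s X` with `Y ∈ E`, it says that
`R_i × Y × L(X) → (ℤ/n)²` is surjective, hence bijective because both sides have `n²` elements
(`border_inj`).

For the last claim, the row `i` of `X ∘_r X` depends only on `R_i`, through a map `shiftRow` that
sends `R_i` to `R_k(X)`, where `k ∈ L(X)` is determined by `r ∈ R_i + k`. Minimality of `|R(X)|`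
makes this map injective on `R(X)` for every `r`. If `j ∈ R ∩ R'`, choosing `r = j + k` with
`k ∈ L(X)` sends both `R` and `R'` to `R_k(X)`, so `R = R'`.
-/

namespace CBC

variable {A : Type*}

/-- `a^i` -/
def apow (a : A) (i : ℕ) : FreeMonoid A := (FreeMonoid.of a) ^ i

/-- the bayonet word `a^i b a^j` -/
def bay (a b : A) (i j : ℕ) : FreeMonoid A := apow a i * FreeMonoid.of b * apow a j

/-- `X` is a (variable-length) code -/
def IsCode (X : Set (FreeMonoid A)) : Prop :=
  ∀ l m : List (FreeMonoid A), (∀ w ∈ l, w ∈ X) → (∀ w ∈ m, w ∈ X) →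
    l.prod = m.prod → l = m

/-- `X` is a maximal code -/
def IsMaximalCode (X : Set (FreeMonoid A)) : Prop :=
  IsCode X ∧ ∀ Y : Set (FreeMonoid A), IsCode Y → X ⊆ Y → Y = X

/-- a bayonet code : a code included in `a^* b a^*` -/
def IsBayonetCode (a b : A) (Y : Set (FreeMonoid A)) : Prop :=
  (∀ w ∈ Y, ∃ i j : ℕ, w = bay a b i j) ∧ IsCode Y

/-- an `n`-complete bayonet code -/
def IsCbc (a b : A) (n : ℕ) (X : Set (FreeMonoid A)) : Prop :=
  (∀ w ∈ X, ∃ i < n, ∃ j < n, w = bay a b i j) ∧ X.ncard = n ∧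
    IsCode (insert (apow a n) X)

/-- the composition `X ∘_r Y` -/
def comp (a b : A) (n r : ℕ) (X Y : Set (FreeMonoid A)) : Set (FreeMonoid A) :=
  { w | ∃ i j k l : ℕ, bay a b i j ∈ X ∧ bay a b k l ∈ Y ∧ (j + k) % n = r ∧
        w = bay a b i l }

/-- iterated composition `X ∘_{r₁} X₁ ∘_{r₂} ⋯ ∘_{r_k} X_k` -/
def compList (a b : A) (n : ℕ) (X : Set (FreeMonoid A))
    (rest : List (ℕ × Set (FreeMonoid A))) : Set (FreeMonoid A) :=
  rest.foldl (fun acc p => comp a b n p.1 acc p.2) X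

/-- a compatible set of `n`-cbc -/
def Compatible (a b : A) (n : ℕ) (E : Set (Set (FreeMonoid A))) : Prop :=
  ∀ X ∈ E, ∀ rest : List (ℕ × Set (FreeMonoid A)),
    (∀ p ∈ rest, p.1 < n ∧ p.2 ∈ E) → IsCbc a b n (compList a b n X rest)

/-- a stable set of `n`-cbc -/
def StableSet (a b : A) (n : ℕ) (S : Set (Set (FreeMonoid A))) : Prop :=
  (∀ X ∈ S, IsCbc a b n X) ∧ ∀ X ∈ S, ∀ Y ∈ S, ∀ r < n, comp a b n r X Y ∈ S

/-- `E^∘`, the smallest stable set containing `E` -/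
def stableClosure (a b : A) (n : ℕ) (E : Set (Set (FreeMonoid A))) :
    Set (Set (FreeMonoid A)) :=
  ⋂₀ { S | StableSet a b n S ∧ E ⊆ S }

/-- `(P,Q)` is a border of the `n`-cbc `X` : the map
`P × X × Q → (ZMod n)²`, `(p, a^i b a^j, q) ↦ (p + i, j + q)` is a bijection. -/
def IsBorder (a b : A) (n : ℕ) (P Q : Set ℤ) (X : Set (FreeMonoid A)) : Prop :=
  ∀ c : ZMod n × ZMod n, ∃! t : ℤ × (ℕ × ℕ) × ℤ,
    t.1 ∈ P ∧ bay a b t.2.1.1 t.2.1.2 ∈ X ∧ t.2.2 ∈ Q ∧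
    (t.1 : ZMod n) + (t.2.1.1 : ZMod n) = c.1 ∧
    (t.2.1.2 : ZMod n) + (t.2.2 : ZMod n) = c.2

/-- `(P,Q)` is a border of every element of `E` -/
def BordersFamily (a b : A) (n : ℕ) (P Q : Set ℤ)
    (E : Set (Set (FreeMonoid A))) : Prop :=
  ∀ X ∈ E, IsBorder a b n P Q X

def toZ (S : Set ℕ) : Set ℤ := (fun i : ℕ => (i : ℤ)) '' S

def toZModN (n : ℕ) (S : Set ℕ) : Set (ZMod n) := (fun i : ℕ => (i : ZMod n)) '' S

def toZModZ (n : ℕ) (S : Set ℤ) : Set (ZMod n) := (fun i : ℤ => (i : ZMod n)) '' S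

/-- `(P,Q)` is a factorization of size `n` -/
def IsFactorization (n : ℕ) (P Q : Set (ZMod n)) : Prop :=
  ∀ c : ZMod n, ∃! pq : ZMod n × ZMod n, pq.1 ∈ P ∧ pq.2 ∈ Q ∧ pq.1 + pq.2 = c

/-- `L_k^n(Y)` -/
def Lset (a b : A) (n : ℕ) (Y : Set (FreeMonoid A)) (k : ℕ) : Set ℕ :=
  { i | ∃ i' j' : ℕ, bay a b i' j' ∈ Y ∧ i' % n = i ∧ j' % n = k }

/-- `R_k^n(Y)` -/
def Rset (a b : A) (n : ℕ) (Y : Set (FreeMonoid A)) (k : ℕ) : Set ℕ :=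
  { j | ∃ i' j' : ℕ, bay a b i' j' ∈ Y ∧ i' % n = k ∧ j' % n = j }

/-- `L(Y)` -/
def Lfull (a b : A) (n : ℕ) (Y : Set (FreeMonoid A)) : Set ℕ :=
  { i | ∃ i' j' : ℕ, bay a b i' j' ∈ Y ∧ i' % n = i }

/-- `R(Y)` -/
def Rfam (a b : A) (n : ℕ) (Y : Set (FreeMonoid A)) : Set (Set ℕ) :=
  { R | ∃ k ∈ Lfull a b n Y, R = Rset a b n Y k }

/-- the `n`-cbc `X` borders the set `E` -/
def CbcBorders (a b : A) (n : ℕ) (X : Set (FreeMonoid A))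
    (E : Set (Set (FreeMonoid A))) : Prop :=
  ∀ R ∈ Rfam a b n X,
    IsFactorization n (toZModN n R) (toZModN n (Lfull a b n X)) ∧
    BordersFamily a b n (toZ R) (toZ (Lfull a b n X)) E

/-- `R_k^n(a^P X)` -/
def RsetShift (a b : A) (n : ℕ) (P : Set ℤ) (X : Set (FreeMonoid A)) (k : ℕ) :
    Set ℕ :=
  { j | j < n ∧ ∃ (p : ℤ) (i' j' : ℕ), p ∈ P ∧ bay a b i' j' ∈ X ∧
        ((p + (i' : ℤ) : ℤ) : ZMod n) = (k : ZMod n) ∧ j' % n = j }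

/-- `L_k^n(Y a^Q)` -/
def LsetShift (a b : A) (n : ℕ) (Y : Set (FreeMonoid A)) (Q : Set ℤ) (k : ℕ) :
    Set ℕ :=
  { i | i < n ∧ ∃ (i' j' : ℕ) (q : ℤ), q ∈ Q ∧ bay a b i' j' ∈ Y ∧
        i' % n = i ∧ (((j' : ℤ) + q : ℤ) : ZMod n) = (k : ZMod n) }

/-- `H_t(X)`, for `X ⊆ { a^i b a^j : i, j ∈ [n) }` -/
def Hfam (a b : A) (n t : ℕ) (X : Set (FreeMonoid A)) : Set (Set (FreeMonoid A)) :=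
  { Y | ∃ f : ℕ → ℕ → ℕ → ℕ, (∀ i j s, f i j s < t) ∧
      Y = { w | ∃ i j s : ℕ, bay a b i j ∈ X ∧ s < t ∧
                w = bay a b (i + f i j s * n) (j + s * n) } }

/-- `E' ∈ ℋ_t(E)` -/
def HfamSet (a b : A) (n t : ℕ) (E E' : Set (Set (FreeMonoid A))) : Prop :=
  (∀ Y ∈ E', ∃ X ∈ E, Y ∈ Hfam a b n t X) ∧
  (∀ X ∈ E, ∃ Y ∈ E', Y ∈ Hfam a b n t X)

/-- the dual `X̃` of a bayonet code -/
def dual (a b : A) (X : Set (FreeMonoid A)) : Set (FreeMonoid A) :=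
  { w | ∃ i j : ℕ, bay a b i j ∈ X ∧ w = bay a b j i }

/-- a set `E` of `n`-cbc is of Hajós -/
def IsHajos (a b : A) (n : ℕ) (E : Set (Set (FreeMonoid A))) : Prop :=
  ∃ (k : ℕ) (ts : ℕ → ℕ) (Ys : ℕ → Set (FreeMonoid A)),
    (∀ i, 1 ≤ i → i ≤ k → 1 < ts i) ∧
    (∏ i ∈ Finset.Icc 1 k, ts i) = n ∧
    Ys 0 = {FreeMonoid.of b} ∧
    (∀ i, i ≤ k - 1 → IsBayonetCode a b (Ys i)) ∧
    (∀ i, 1 ≤ i → i ≤ k - 1 →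
      dual a b (Ys i) ∈ Hfam a b (∏ j ∈ Finset.Icc 1 (i - 1), ts j) (ts i) (Ys (i - 1))) ∧
    (if k = 0 then ∀ Y ∈ E, Y = ({FreeMonoid.of b} : Set (FreeMonoid A))
     else
       (∀ Y ∈ E, Y ∈ Hfam a b (∏ j ∈ Finset.Icc 1 (k - 1), ts j) (ts k) (Ys (k - 1))) ∨
       (∀ Y ∈ E, dual a b Y ∈ Hfam a b (∏ j ∈ Finset.Icc 1 (k - 1), ts j) (ts k) (Ys (k - 1))))

/-- a Krasner factorization of size `n` -/
def IsKrasner (n : ℕ) (P Q : Set ℕ) : Prop :=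
  P.Finite ∧ Q.Finite ∧ P.ncard * Q.ncard = n ∧ ∀ k < n, ∃ p ∈ P, ∃ q ∈ Q, k = p + q

/-- `C_M(ω) = { a^{i mod n} b a^{j mod n} : a^i ω a^j ∈ M^* }` -/
def Cword (a b : A) (n : ℕ) (M : Set (FreeMonoid A)) (ω : FreeMonoid A) :
    Set (FreeMonoid A) :=
  { w | ∃ i j : ℕ, apow a i * ω * apow a j ∈ Submonoid.closure M ∧
        w = bay a b (i % n) (j % n) }

/-! ### Bayonet words and compositions -/

lemma bay_inj {a b : A} (hab : a ≠ b) {i j i' j' : ℕ} (h : bay a b i j = bay a b i' j') :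
    i = i' ∧ j = j' := by
  have key : ∀ i j : ℕ, FreeMonoid.toList (bay a b i j)
      = List.replicate i a ++ b :: List.replicate j a := by
    intro i j
    have hp : ∀ i : ℕ, FreeMonoid.toList (FreeMonoid.of a ^ i) = List.replicate i a := by
      intro i
      induction i with
      | zero => rfl
      | succ i ih =>
        rw [pow_succ', FreeMonoid.toList_mul, ih, FreeMonoid.toList_of, List.replicate_succ,
          List.singleton_append]
    simp [bay, apow, FreeMonoid.toList_mul, FreeMonoid.toList_of, hp]
  have h2 : List.replicate i a ++ b :: List.replicate j a
      = List.replicate i' a ++ b :: List.replicate j' a := by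
    rw [← key, ← key, h]
  clear h key
  induction i generalizing i' with
  | zero =>
    cases i' with
    | zero => simpa using congrArg List.length h2
    | succ i' =>
      simp only [List.replicate_succ, List.replicate_zero, List.nil_append, List.cons_append,
        List.cons.injEq] at h2
      exact absurd h2.1.symm hab
  | succ i ih =>
    cases i' with
    | zero =>
      simp only [List.replicate_succ, List.replicate_zero, List.nil_append, List.cons_append,
        List.cons.injEq] at h2
      exact absurd h2.1 hab
    | succ i' =>
      simp only [List.replicate_succ, List.cons_append, List.cons.injEq, true_and] at h2
      have := ih h2
      omega

lemma bay_mem_comp {a b : A} (hab : a ≠ b) {n r : ℕ} {X Y : Set (FreeMonoid A)} {i l : ℕ} :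
    bay a b i l ∈ comp a b n r X Y ↔
      ∃ j k, bay a b i j ∈ X ∧ bay a b k l ∈ Y ∧ (j + k) % n = r := by
  constructor
  · rintro ⟨i', j, k, l', h1, h2, h3, h4⟩
    obtain ⟨rfl, rfl⟩ := bay_inj hab h4
    exact ⟨j, k, h1, h2, h3⟩
  · rintro ⟨j, k, h1, h2, h3⟩
    exact ⟨i, j, k, l, h1, h2, h3, rfl⟩

lemma comp_assoc {a b : A} (hab : a ≠ b) {n r s : ℕ} {X Y W : Set (FreeMonoid A)} :
    comp a b n s (comp a b n r X Y) W = comp a b n r X (comp a b n s Y W) := by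
  ext w
  constructor
  · rintro ⟨i, j, k, l, h1, h2, h3, rfl⟩
    obtain ⟨j', k', h4, h5, h6⟩ := (bay_mem_comp hab).1 h1
    exact (bay_mem_comp hab).2 ⟨j', k', h4, (bay_mem_comp hab).2 ⟨j, k, h5, h2, h3⟩, h6⟩
  · rintro ⟨i, j, k, l, h1, h2, h3, rfl⟩
    obtain ⟨j', k', h4, h5, h6⟩ := (bay_mem_comp hab).1 h2
    exact (bay_mem_comp hab).2 ⟨j', k', (bay_mem_comp hab).2 ⟨j, k, h1, h4, h3⟩, h5, h6⟩

lemma comp_compList {a b : A} (hab : a ≠ b) {n r : ℕ} (X Y : Set (FreeMonoid A))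
    (rest : List (ℕ × Set (FreeMonoid A))) :
    comp a b n r X (compList a b n Y rest) = compList a b n X ((r, Y) :: rest) := by
  induction rest using List.reverseRecOn with
  | nil => rfl
  | append_singleton l p ih =>
    simp only [compList, List.foldl_append, List.foldl_cons, List.foldl_nil] at ih ⊢
    rw [← comp_assoc hab, ih]

lemma compList_append {a b : A} {n : ℕ} (X : Set (FreeMonoid A))
    (l l' : List (ℕ × Set (FreeMonoid A))) :
    compList a b n X (l ++ l') = compList a b n (compList a b n X l) l' := by
  simp [compList, List.foldl_append]

lemma Lfull_comp_subset {a b : A} (hab : a ≠ b) {n r : ℕ} {X Y : Set (FreeMonoid A)} :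
    Lfull a b n (comp a b n r X Y) ⊆ Lfull a b n X := by
  rintro i ⟨i', j', h, hi⟩
  obtain ⟨j, k, h1, -, -⟩ := (bay_mem_comp hab).1 h
  exact ⟨i', j, h1, hi⟩

lemma Lfull_compList_subset {a b : A} (hab : a ≠ b) {n : ℕ}
    (rest : List (ℕ × Set (FreeMonoid A))) (X : Set (FreeMonoid A)) :
    Lfull a b n (compList a b n X rest) ⊆ Lfull a b n X := by
  induction rest generalizing X with
  | nil => exact subset_rfl
  | cons p rest ih => exact (ih (comp a b n p.1 X p.2)).trans (Lfull_comp_subset hab)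

/-! ### The finite set of pairs of a complete bayonet code -/

lemma IsCbc.lt {a b : A} (hab : a ≠ b) {n : ℕ} {X : Set (FreeMonoid A)} (hX : IsCbc a b n X)
    {i j : ℕ} (h : bay a b i j ∈ X) : i < n ∧ j < n := by
  obtain ⟨i', hi, j', hj, e⟩ := hX.1 _ h
  obtain ⟨rfl, rfl⟩ := bay_inj hab e
  exact ⟨hi, hj⟩

lemma IsCbc.mem_Lfull {a b : A} (hab : a ≠ b) {n : ℕ} {X : Set (FreeMonoid A)}
    (hX : IsCbc a b n X) {i : ℕ} : i ∈ Lfull a b n X ↔ ∃ j, bay a b i j ∈ X := by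
  constructor
  · rintro ⟨i', j', h, rfl⟩
    rw [Nat.mod_eq_of_lt (hX.lt hab h).1]
    exact ⟨j', h⟩
  · rintro ⟨j, h⟩
    exact ⟨i, j, h, Nat.mod_eq_of_lt (hX.lt hab h).1⟩

lemma IsCbc.mem_Rset {a b : A} (hab : a ≠ b) {n : ℕ} {X : Set (FreeMonoid A)}
    (hX : IsCbc a b n X) {i j : ℕ} : j ∈ Rset a b n X i ↔ bay a b i j ∈ X := by
  constructor
  · rintro ⟨i', j', h, rfl, rfl⟩
    rwa [Nat.mod_eq_of_lt (hX.lt hab h).1, Nat.mod_eq_of_lt (hX.lt hab h).2]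
  · intro h
    exact ⟨i, j, h, Nat.mod_eq_of_lt (hX.lt hab h).1, Nat.mod_eq_of_lt (hX.lt hab h).2⟩

lemma IsCbc.Lfull_finite {a b : A} (hab : a ≠ b) {n : ℕ} {X : Set (FreeMonoid A)}
    (hX : IsCbc a b n X) : (Lfull a b n X).Finite := by
  refine (Set.finite_Iio n).subset fun i hi => ?_
  obtain ⟨j, h⟩ := (hX.mem_Lfull hab).1 hi
  exact (hX.lt hab h).1

open Classical in
/-- The exponent pairs `(i, j) ∈ [n)²` with `a^i b a^j ∈ X`. For an `n`-cbc these are all the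
exponent pairs of `X`. -/
noncomputable def pairs (a b : A) (n : ℕ) (X : Set (FreeMonoid A)) : Finset (ℕ × ℕ) :=
  (Finset.range n ×ˢ Finset.range n).filter fun p => bay a b p.1 p.2 ∈ X

lemma IsCbc.mem_pairs {a b : A} (hab : a ≠ b) {n : ℕ} {X : Set (FreeMonoid A)}
    (hX : IsCbc a b n X) {p : ℕ × ℕ} : p ∈ pairs a b n X ↔ bay a b p.1 p.2 ∈ X := by
  simp only [pairs, Finset.mem_filter, Finset.mem_product, Finset.mem_range, and_iff_right_iff_imp]
  exact fun h => hX.lt hab h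

lemma IsCbc.card_pairs {a b : A} (hab : a ≠ b) {n : ℕ} {X : Set (FreeMonoid A)}
    (hX : IsCbc a b n X) : (pairs a b n X).card = n := by
  have h1 : X = (fun p : ℕ × ℕ => bay a b p.1 p.2) '' (pairs a b n X : Set (ℕ × ℕ)) := by
    ext w
    constructor
    · intro hw
      obtain ⟨i, -, j, -, rfl⟩ := hX.1 _ hw
      exact ⟨(i, j), (hX.mem_pairs hab).2 hw, rfl⟩
    · rintro ⟨p, hp, rfl⟩
      exact (hX.mem_pairs hab).1 hp
  have h2 := hX.2.1
  rw [h1, Set.ncard_image_of_injective, Set.ncard_coe_finset] at h2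
  · exact h2
  · intro p q h
    obtain ⟨h1, h2⟩ := bay_inj hab h
    exact Prod.ext h1 h2

/-- The finite set underlying `L(X)`. -/
noncomputable def lefts (a b : A) (n : ℕ) (X : Set (FreeMonoid A)) : Finset ℕ :=
  (pairs a b n X).image Prod.fst

/-- The finite set underlying the row `R_i(X)`. -/
noncomputable def row (a b : A) (n : ℕ) (X : Set (FreeMonoid A)) (i : ℕ) : Finset ℕ :=
  ((pairs a b n X).filter fun p => p.1 = i).image Prod.snd

lemma IsCbc.mem_lefts {a b : A} (hab : a ≠ b) {n : ℕ} {X : Set (FreeMonoid A)}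
    (hX : IsCbc a b n X) {i : ℕ} : i ∈ lefts a b n X ↔ i ∈ Lfull a b n X := by
  rw [hX.mem_Lfull hab]
  simp [lefts, hX.mem_pairs hab]

lemma IsCbc.mem_row {a b : A} (hab : a ≠ b) {n : ℕ} {X : Set (FreeMonoid A)}
    (hX : IsCbc a b n X) {i j : ℕ} : j ∈ row a b n X i ↔ j ∈ Rset a b n X i := by
  rw [hX.mem_Rset hab]
  simp [row, hX.mem_pairs hab]

/-! ### Factorizations and borders by counting -/

/-- If each row of `X` meets every residue when added to `L(X)`, then each row has exactly
`n / |L(X)|` elements: the rows are at least that large, and there are only `n` pairs. -/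
lemma row_card_mul {a b : A} (hab : a ≠ b) {n : ℕ} {X : Set (FreeMonoid A)}
    (hX : IsCbc a b n X)
    (hsurj : ∀ i ∈ Lfull a b n X, ∀ r < n, ∃ j ∈ Rset a b n X i, ∃ k ∈ Lfull a b n X,
      (j + k) % n = r) {i : ℕ} (hi : i ∈ Lfull a b n X) :
    (row a b n X i).card * (lefts a b n X).card = n := by
  have hge : ∀ i ∈ lefts a b n X, n ≤ (row a b n X i).card * (lefts a b n X).card := by
    intro i hi
    rw [← Finset.card_product]
    have : Finset.range n ⊆
        (row a b n X i ×ˢ lefts a b n X).image (fun p => (p.1 + p.2) % n) := by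
      intro r hr
      obtain ⟨j, hj, k, hk, h⟩ :=
        hsurj i ((hX.mem_lefts hab).1 hi) r (Finset.mem_range.1 hr)
      exact Finset.mem_image.2 ⟨(j, k), Finset.mem_product.2
        ⟨(hX.mem_row hab).2 hj, (hX.mem_lefts hab).2 hk⟩, h⟩
    simpa using (Finset.card_le_card this).trans Finset.card_image_le
  have hsum : ∑ i ∈ lefts a b n X, (row a b n X i).card = n := by
    refine Eq.trans ?_ (hX.card_pairs hab)
    rw [Finset.card_eq_sum_card_image Prod.fst]
    refine Finset.sum_congr rfl fun i _ => ?_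
    refine (Finset.card_image_of_injOn ?_)
    intro p hp q hq h
    simp only [Finset.coe_filter, Set.mem_setOf_eq] at hp hq
    exact Prod.ext (hp.2.trans hq.2.symm) h
  have hsum2 : ∑ _i ∈ lefts a b n X, n
      = ∑ i ∈ lefts a b n X, (row a b n X i).card * (lefts a b n X).card := by
    rw [← Finset.sum_mul, hsum, Finset.sum_const, smul_eq_mul, mul_comm]
  exact (((Finset.sum_eq_sum_iff_of_le hge).1 hsum2) i ((hX.mem_lefts hab).2 hi)).symm

lemma row_add_inj {a b : A} (hab : a ≠ b) {n : ℕ} (hn : 1 ≤ n) {X : Set (FreeMonoid A)}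
    (hX : IsCbc a b n X)
    (hsurj : ∀ i ∈ Lfull a b n X, ∀ r < n, ∃ j ∈ Rset a b n X i, ∃ k ∈ Lfull a b n X,
      (j + k) % n = r) {i : ℕ} (hi : i ∈ Lfull a b n X) {j k j' k' : ℕ}
    (hj : j ∈ Rset a b n X i) (hk : k ∈ Lfull a b n X) (hj' : j' ∈ Rset a b n X i)
    (hk' : k' ∈ Lfull a b n X) (h : (j + k) % n = (j' + k') % n) : j = j' ∧ k = k' := by
  have hinj := Finset.injOn_of_surjOn_of_card_le (s := row a b n X i ×ˢ lefts a b n X)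
    (t := Finset.range n) (fun p => (p.1 + p.2) % n)
    (fun p _ => by simpa using Nat.mod_lt _ hn)
    (by
      intro r hr
      obtain ⟨j, hj, k, hk, h⟩ := hsurj i hi r (by simpa using hr)
      exact ⟨(j, k), by simp [hX.mem_row hab, hX.mem_lefts hab, hj, hk], h⟩)
    (by rw [Finset.card_product, row_card_mul hab hX hsurj hi, Finset.card_range])
  have := @hinj (j, k) (by simp [hX.mem_row hab, hX.mem_lefts hab, hj, hk])
    (j', k') (by simp [hX.mem_row hab, hX.mem_lefts hab, hj', hk']) h
  simpa using this

/-- The surjection `R_i(X) × Y × L(X) → (ℤ/n)²` is injective, both sides having `n²` elements. -/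
lemma border_inj {a b : A} (hab : a ≠ b) {n : ℕ} (hn : 1 ≤ n) {X Y : Set (FreeMonoid A)}
    (hX : IsCbc a b n X) (hY : IsCbc a b n Y)
    (hsurj : ∀ i ∈ Lfull a b n X, ∀ r < n, ∃ j ∈ Rset a b n X i, ∃ k ∈ Lfull a b n X,
      (j + k) % n = r) {i : ℕ} (hi : i ∈ Lfull a b n X)
    (hb : ∀ r < n, ∀ s < n, ∃ j ∈ Rset a b n X i, ∃ k l, bay a b k l ∈ Y ∧
      ∃ m ∈ Lfull a b n X, (j + k) % n = r ∧ (l + m) % n = s)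
    {j k l m j' k' l' m' : ℕ}
    (hj : j ∈ Rset a b n X i) (hkl : bay a b k l ∈ Y) (hm : m ∈ Lfull a b n X)
    (hj' : j' ∈ Rset a b n X i) (hkl' : bay a b k' l' ∈ Y) (hm' : m' ∈ Lfull a b n X)
    (h : (j + k) % n = (j' + k') % n) (h' : (l + m) % n = (l' + m') % n) :
    j = j' ∧ k = k' ∧ l = l' ∧ m = m' := by
  have hinj := Finset.injOn_of_surjOn_of_card_le
    (s := row a b n X i ×ˢ pairs a b n Y ×ˢ lefts a b n X)
    (t := Finset.range n ×ˢ Finset.range n)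
    (fun p => ((p.1 + p.2.1.1) % n, (p.2.1.2 + p.2.2) % n))
    (fun p _ => by simp [Nat.mod_lt _ hn])
    (by
      rintro ⟨r, s⟩ hr
      obtain ⟨hr, hs⟩ : r < n ∧ s < n := by simpa using hr
      obtain ⟨j, hj, k, l, hkl, m, hm, h1, h2⟩ := hb r hr s hs
      exact ⟨(j, (k, l), m), by
        simp [hX.mem_row hab, hX.mem_lefts hab, hY.mem_pairs hab, hj, hkl, hm],
        by simp [h1, h2]⟩)
    (by
      rw [Finset.card_product, Finset.card_product, Finset.card_product, hY.card_pairs hab,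
        mul_left_comm, row_card_mul hab hX hsurj hi, Finset.card_range])
  have := @hinj (j, (k, l), m)
    (by simp [hX.mem_row hab, hX.mem_lefts hab, hY.mem_pairs hab, hj, hkl, hm])
    (j', (k', l'), m')
    (by simp [hX.mem_row hab, hX.mem_lefts hab, hY.mem_pairs hab, hj', hkl', hm'])
    (by simp [h, h'])
  simp only [Prod.mk.injEq] at this
  tauto

lemma natCast_add_eq_iff {n : ℕ} [NeZero n] (j k : ℕ) (c : ZMod n) :
    (j : ZMod n) + (k : ZMod n) = c ↔ (j + k) % n = c.val := by
  rw [← Nat.cast_add, ← ZMod.val_natCast]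
  exact (ZMod.val_injective n).eq_iff.symm

/-! ### Minimal compositions -/

/-- The row of `X ∘_r Y` obtained from the row `R` of `X`. -/
def shiftRow (a b : A) (n r : ℕ) (Y : Set (FreeMonoid A)) (R : Set ℕ) : Set ℕ :=
  { l | ∃ j ∈ R, ∃ k, bay a b k l ∈ Y ∧ (j + k) % n = r }

lemma Rset_comp {a b : A} (hab : a ≠ b) {n r : ℕ} {X Y : Set (FreeMonoid A)}
    (hX : IsCbc a b n X) (hXY : IsCbc a b n (comp a b n r X Y)) (i : ℕ) :
    Rset a b n (comp a b n r X Y) i = shiftRow a b n r Y (Rset a b n X i) := by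
  ext l
  rw [hXY.mem_Rset hab, bay_mem_comp hab]
  simp only [shiftRow, Set.mem_ofPred_eq, hX.mem_Rset hab]
  grind

theorem statement4 (a b : A) (hab : a ≠ b) (n : ℕ) (hn : 1 ≤ n)
    (E : Set (Set (FreeMonoid A))) (hE : Compatible a b n E) (hne : E.Nonempty)
    (Z : Set (FreeMonoid A)) (hZ : Z ∈ E) :
    ∃ rest : List (ℕ × Set (FreeMonoid A)),
      (∀ p ∈ rest, p.1 < n ∧ p.2 ∈ E) ∧
      CbcBorders a b n (compList a b n Z rest) E ∧
      ∀ R ∈ Rfam a b n (compList a b n Z rest),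
        ∀ R' ∈ Rfam a b n (compList a b n Z rest),
          (R ∩ R').Nonempty → R = R' := by
  have : NeZero n := ⟨by omega⟩
  set V : Set (List (ℕ × Set (FreeMonoid A))) := {rest | ∀ p ∈ rest, p.1 < n ∧ p.2 ∈ E} with hV
  have hVapp : ∀ {l l'}, l ∈ V → l' ∈ V → l ++ l' ∈ V := by
    intro l l' hl hl' p hp
    rcases List.mem_append.1 hp with hp | hp
    exacts [hl p hp, hl' p hp]
  have hVcons : ∀ {r Y l}, r < n → Y ∈ E → l ∈ V → (r, Y) :: l ∈ V := by
    intro r Y l hr hY hl p hp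
    rcases List.mem_cons.1 hp with rfl | hp
    exacts [⟨hr, hY⟩, hl p hp]
  have hcbc : ∀ l ∈ V, IsCbc a b n (compList a b n Z l) := fun l hl => hE Z hZ l hl
  have hECbc : ∀ Y ∈ E, IsCbc a b n Y := fun Y hY => hE Y hY [] (by simp)
  -- minimize `|L(X)|`, then `|R(X)|`
  obtain ⟨l₀, hl₀, hmin₀⟩ : ∃ l ∈ V, ∀ l' ∈ V,
      (Lfull a b n (compList a b n Z l)).ncard ≤ (Lfull a b n (compList a b n Z l')).ncard := by
    obtain ⟨l, hl, h⟩ := exists_minimalFor_of_wellFoundedLT (· ∈ V)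
      (fun l => (Lfull a b n (compList a b n Z l)).ncard) ⟨[], by simp [hV]⟩
    exact ⟨l, hl, fun l' hl' => (le_total _ _).elim id (h hl')⟩
  obtain ⟨rest, ⟨hrest, hcard⟩, hminR⟩ : ∃ l, (l ∈ V ∧
      (Lfull a b n (compList a b n Z l)).ncard = (Lfull a b n (compList a b n Z l₀)).ncard) ∧
      ∀ l', (l' ∈ V ∧
        (Lfull a b n (compList a b n Z l')).ncard = (Lfull a b n (compList a b n Z l₀)).ncard) →
      (Rfam a b n (compList a b n Z l)).ncard ≤ (Rfam a b n (compList a b n Z l')).ncard := by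
    obtain ⟨l, hl, h⟩ := exists_minimalFor_of_wellFoundedLT (fun l => l ∈ V ∧
      (Lfull a b n (compList a b n Z l)).ncard = (Lfull a b n (compList a b n Z l₀)).ncard)
      (fun l => (Rfam a b n (compList a b n Z l)).ncard) ⟨l₀, hl₀, rfl⟩
    exact ⟨l, hl, fun l' hl' => (le_total _ _).elim id (h hl')⟩
  refine ⟨rest, hrest, ?_⟩
  have hX : IsCbc a b n (compList a b n Z rest) := hcbc rest hrest
  have hLeq : ∀ l ∈ V, Lfull a b n (compList a b n Z (rest ++ l))
      = Lfull a b n (compList a b n Z rest) := by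
    intro l hl
    refine Set.eq_of_subset_of_ncard_le ?_ ?_ (hX.Lfull_finite hab)
    · rw [compList_append]
      exact Lfull_compList_subset hab _ _
    · rw [hcard]
      exact hmin₀ _ (hVapp hrest hl)
  -- both compositions with `X` are again compositions starting with `Z`
  have hXX : ∀ r, comp a b n r (compList a b n Z rest) (compList a b n Z rest)
      = compList a b n Z (rest ++ (r, Z) :: rest) := by
    intro r
    rw [comp_compList hab, ← compList_append]
  have hXYX : ∀ r s Y, comp a b n r (compList a b n Z rest)
      (comp a b n s Y (compList a b n Z rest))
      = compList a b n Z (rest ++ (r, Y) :: (s, Z) :: rest) := by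
    intro r s Y
    rw [comp_compList hab, comp_compList hab, ← compList_append]
  have hVXX : ∀ r < n, (r, Z) :: rest ∈ V := fun r hr => hVcons hr hZ hrest
  have hLXX : ∀ r < n, Lfull a b n (comp a b n r (compList a b n Z rest) (compList a b n Z rest))
      = Lfull a b n (compList a b n Z rest) := by
    intro r hr
    rw [hXX, hLeq _ (hVXX r hr)]
  have hCXX : ∀ r < n,
      IsCbc a b n (comp a b n r (compList a b n Z rest) (compList a b n Z rest)) := by
    intro r hr
    rw [hXX]
    exact hcbc _ (hVapp hrest (hVXX r hr))
  have hsurj2 : ∀ Y ∈ E, ∀ i ∈ Lfull a b n (compList a b n Z rest), ∀ r < n, ∀ s < n,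
      ∃ j ∈ Rset a b n (compList a b n Z rest) i, ∃ k l, bay a b k l ∈ Y ∧
      ∃ m ∈ Lfull a b n (compList a b n Z rest), (j + k) % n = r ∧ (l + m) % n = s := by
    intro Y hY i hi r hr s hs
    have hv : (r, Y) :: (s, Z) :: rest ∈ V := hVcons hr hY (hVXX s hs)
    have hc := hcbc _ (hVapp hrest hv)
    have hi' := hi
    rw [← hLeq _ hv, hc.mem_Lfull hab, ← hXYX] at hi'
    obtain ⟨t, ht⟩ := hi'
    obtain ⟨j, k, h1, h2, h3⟩ := (bay_mem_comp hab).1 ht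
    obtain ⟨l, m, h4, h5, h6⟩ := (bay_mem_comp hab).1 h2
    exact ⟨j, (hX.mem_Rset hab).2 h1, k, l, h4, m, (hX.mem_Lfull hab).2 ⟨t, h5⟩, h3, h6⟩
  have hsurj : ∀ i ∈ Lfull a b n (compList a b n Z rest), ∀ r < n,
      ∃ j ∈ Rset a b n (compList a b n Z rest) i,
      ∃ k ∈ Lfull a b n (compList a b n Z rest), (j + k) % n = r := by
    intro i hi r hr
    have hi' := hi
    rw [← hLXX r hr, (hCXX r hr).mem_Lfull hab] at hi'
    obtain ⟨t, ht⟩ := hi'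
    obtain ⟨j, k, h1, h2, h3⟩ := (bay_mem_comp hab).1 ht
    exact ⟨j, (hX.mem_Rset hab).2 h1, k, (hX.mem_Lfull hab).2 ⟨t, h2⟩, h3⟩
  have hRXX : ∀ r < n,
      Rfam a b n (comp a b n r (compList a b n Z rest) (compList a b n Z rest))
      = shiftRow a b n r (compList a b n Z rest) '' Rfam a b n (compList a b n Z rest) := by
    intro r hr
    ext R
    simp only [Rfam, Set.mem_ofPred_eq, Set.mem_image, hLXX r hr, Rset_comp hab hX (hCXX r hr)]
    constructor
    · rintro ⟨k, hk, rfl⟩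
      exact ⟨_, ⟨k, hk, rfl⟩, rfl⟩
    · rintro ⟨_, ⟨k, hk, rfl⟩, rfl⟩
      exact ⟨k, hk, rfl⟩
  have hRfin : (Rfam a b n (compList a b n Z rest)).Finite := by
    refine ((hX.Lfull_finite hab).image (Rset a b n (compList a b n Z rest))).subset ?_
    rintro R ⟨k, hk, rfl⟩
    exact ⟨k, hk, rfl⟩
  have hinj : ∀ r < n, Set.InjOn (shiftRow a b n r (compList a b n Z rest))
      (Rfam a b n (compList a b n Z rest)) := by
    intro r hr
    refine Set.injOn_of_ncard_image_eq (le_antisymm (Set.ncard_image_le hRfin) ?_) hRfin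
    rw [← hRXX r hr, hXX]
    refine hminR _ ⟨hVapp hrest (hVXX r hr), ?_⟩
    rw [hLeq _ (hVXX r hr), hcard]
  refine ⟨?_, ?_⟩
  · rintro R ⟨i, hi, rfl⟩
    refine ⟨?_, ?_⟩
    · intro c
      obtain ⟨j, hj, k, hk, h⟩ := hsurj i hi c.val (ZMod.val_lt c)
      refine ⟨((j : ZMod n), (k : ZMod n)), ⟨⟨j, hj, rfl⟩, ⟨k, hk, rfl⟩,
        (natCast_add_eq_iff _ _ _).2 h⟩, ?_⟩
      rintro ⟨_, _⟩ ⟨⟨j', hj', rfl⟩, ⟨k', hk', rfl⟩, h'⟩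
      have h'' := (natCast_add_eq_iff _ _ _).1 h'
      obtain ⟨rfl, rfl⟩ := row_add_inj hab hn hX hsurj hi hj hk hj' hk' (h.trans h''.symm)
      rfl
    · rintro Y hY ⟨c, d⟩
      obtain ⟨j, hj, k, l, hkl, m, hm, h1, h2⟩ :=
        hsurj2 Y hY i hi c.val (ZMod.val_lt c) d.val (ZMod.val_lt d)
      refine ⟨((j : ℤ), (k, l), (m : ℤ)), ⟨⟨j, hj, rfl⟩, hkl, ⟨m, hm, rfl⟩, ?_, ?_⟩, ?_⟩
      · simpa using (natCast_add_eq_iff _ _ _).2 h1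
      · simpa using (natCast_add_eq_iff _ _ _).2 h2
      · rintro ⟨_, ⟨k', l'⟩, _⟩ ⟨⟨j', hj', rfl⟩, hkl', ⟨m', hm', rfl⟩, h1', h2'⟩
        have h1'' := (natCast_add_eq_iff j' k' c).1 (by simpa using h1')
        have h2'' := (natCast_add_eq_iff l' m' d).1 (by simpa using h2')
        obtain ⟨rfl, rfl, rfl, rfl⟩ := border_inj hab hn hX (hECbc Y hY) hsurj hi
          (hsurj2 Y hY i hi) hj hkl hm hj' hkl' hm' (h1.trans h1''.symm) (h2.trans h2''.symm)
        rfl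
  · rintro R ⟨i, hi, rfl⟩ R' ⟨i', hi', rfl⟩ ⟨j, hj, hj'⟩
    -- for `r = j + i`, the only decomposition of `r` in a row containing `j` is `j + i`
    have hr : (j + i) % n < n := Nat.mod_lt _ hn
    have key : ∀ q ∈ Lfull a b n (compList a b n Z rest),
        j ∈ Rset a b n (compList a b n Z rest) q →
        shiftRow a b n ((j + i) % n) (compList a b n Z rest)
          (Rset a b n (compList a b n Z rest) q) = Rset a b n (compList a b n Z rest) i := by
      intro q hq hjq
      ext l
      rw [hX.mem_Rset hab]
      constructor
      · rintro ⟨j₁, hj₁, k, hkl, h⟩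
        obtain ⟨-, rfl⟩ := row_add_inj hab hn hX hsurj hq hj₁
          ((hX.mem_Lfull hab).2 ⟨l, hkl⟩) hjq hi h
        exact hkl
      · intro h
        exact ⟨j, hjq, i, h, rfl⟩
    exact hinj _ hr ⟨i, hi, rfl⟩ ⟨i', hi', rfl⟩ ((key i hi hj).trans (key i' hi' hj').symm)

end CBC
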